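/- arXiv:2108.07608 — 2 statements merged into one kernel-verified Lean document; each statement's English description precedes it below -/
import Mathlib

section
/- Let Λ be a complete noetherian local ring whose residue field has characteristic p > 0, and let G be a finite p-group. If P is a finitely generated projective module over the group algebra Λ[G], then P, regarded as a Λ-module by restriction of scalars, is a free Λ-module whose rank is divisible by the order of G. -/
universe u v

namespace ProjAux

variable {Λ : Type u} [CommRing Λ] {G : Type u} [Group G]

/-- The augmentation map. -/
noncomputable def aug (Λ : Type u) [CommRing Λ] (G : Type u) [Group G] :
    MonoidAlgebra Λ G →ₐ[Λ] Λ := MonoidAlgebra.lift Λ Λ G 1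

/-- The ideal of elements whose augmentation is in the maximal ideal. -/
noncomputable def J (Λ : Type u) [CommRing Λ] [IsLocalRing Λ] (G : Type u) [Group G] :
    Ideal (MonoidAlgebra Λ G) :=
  Ideal.comap (aug Λ G) (IsLocalRing.maximalIdeal Λ)

lemma smul_fixed {S : Type*} [AddCommGroup S] [Module (MonoidAlgebra Λ G) S] [Module Λ S]
    [IsScalarTower Λ (MonoidAlgebra Λ G) S] (s : S)
    (hs : ∀ g : G, MonoidAlgebra.of Λ G g • s = s) (a : MonoidAlgebra Λ G) :
    a • s = aug Λ G a • s := by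
  induction a using MonoidAlgebra.induction_on with
  | of g => rw [hs]; simp [aug]
  | add x y hx hy => rw [add_smul, hx, hy, map_add, add_smul]
  | smul r x hx => rw [smul_assoc, hx, map_smul, smul_assoc]

lemma exists_fixed (p : ℕ) [Fact p.Prime] [Finite G] (hG : IsPGroup p G)
    {S : Type*} [AddCommGroup S] [DistribMulAction G S] [Nontrivial S] [Module (ZMod p) S] :
    ∃ s : S, s ≠ 0 ∧ ∀ g : G, g • s = s := by
  obtain ⟨s, hs⟩ := exists_ne (0 : S)
  let T : Submodule (ZMod p) S := Submodule.span (ZMod p) (Set.range fun g : G => g • s)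
  have hT : ∀ (g : G) (x : S), x ∈ T → g • x ∈ T := by
    intro g x hx
    induction hx using Submodule.span_induction with
    | mem x h =>
      obtain ⟨h, rfl⟩ := h
      exact Submodule.subset_span ⟨g * h, mul_smul _ _ _⟩
    | zero => simp
    | add x y _ _ hx hy => rw [smul_add]; exact T.add_mem hx hy
    | smul c x _ hx =>
      have : g • c • x = c • g • x :=
        map_smul ((DistribSMul.toAddMonoidHom S g).toZModLinearMap p) c x
      rw [this]; exact T.smul_mem _ hx
  let T' : SubMulAction G S := ⟨T, fun g {x} hx => hT g x hx⟩
  have : Module.Finite (ZMod p) T := Module.Finite.span_of_finite _ (Set.finite_range _)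
  have : Finite T := Module.finite_of_finite (ZMod p)
  have : Finite T' := this
  have hsT : s ∈ T := Submodule.subset_span ⟨1, one_smul _ _⟩
  have : Nontrivial T := ⟨⟨⟨s, hsT⟩, 0, fun h => hs (congrArg Subtype.val h)⟩⟩
  have hc : p ∣ Nat.card T' := by
    change p ∣ Nat.card T
    rw [Module.natCard_eq_pow_finrank (K := ZMod p), Nat.card_zmod]
    exact dvd_pow_self p (Module.finrank_pos).ne'
  obtain ⟨b, hb, hne⟩ := hG.exists_fixed_point_of_prime_dvd_card_of_fixed_point T' hc
    (a := ⟨0, T.zero_mem⟩) (fun g => Subtype.ext (smul_zero g))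
  refine ⟨b, fun h => hne (Subtype.ext h.symm), fun g => congrArg Subtype.val (hb g)⟩

variable [IsLocalRing Λ]

lemma exists_gen (p : ℕ) [Fact p.Prime] [CharP (IsLocalRing.ResidueField Λ) p] [Finite G]
    (hG : IsPGroup p G) (S : Type*) [AddCommGroup S] [Module (MonoidAlgebra Λ G) S] [Module Λ S]
    [IsScalarTower Λ (MonoidAlgebra Λ G) S] [IsSimpleModule (MonoidAlgebra Λ G) S]
    [Module.Finite Λ S] : ∃ s : S, s ≠ 0 ∧
      (∀ a : MonoidAlgebra Λ G, a • s = aug Λ G a • s) ∧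
      ∀ c ∈ IsLocalRing.maximalIdeal Λ, ∀ s : S, c • s = 0 := by
  have : Nontrivial S := IsSimpleModule.nontrivial (MonoidAlgebra Λ G) S
  let m := IsLocalRing.maximalIdeal Λ
  let N : Submodule Λ S := m • ⊤
  let N' : Submodule (MonoidAlgebra Λ G) S :=
    { N with
      smul_mem' := fun a x hx => by
        have h : N.map (Algebra.lsmul Λ Λ S a) ≤ N := by
          change (m • ⊤ : Submodule Λ S).map _ ≤ m • ⊤
          rw [Submodule.map_smul'']
          exact Submodule.smul_mono le_rfl le_top
        exact h ⟨x, hx, rfl⟩ }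
  have hN : N ≠ ⊤ := by
    intro h
    have := Submodule.eq_bot_of_le_smul_of_le_jacobson_bot m (⊤ : Submodule Λ S)
      Module.Finite.fg_top h.ge (IsLocalRing.maximalIdeal_le_jacobson _)
    exact top_ne_bot this
  have hN' : N' = ⊥ := by
    refine (eq_bot_or_eq_top N').resolve_right fun h => hN ?_
    refine eq_top_iff.2 fun x _ => ?_
    have : x ∈ N' := h ▸ Submodule.mem_top
    exact this
  have hm : ∀ c ∈ m, ∀ s : S, c • s = 0 := by
    intro c hc s
    have h0 : c • s ∈ (m • ⊤ : Submodule Λ S) :=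
      Submodule.smul_mem_smul hc (Submodule.mem_top : s ∈ (⊤ : Submodule Λ S))
    have : c • s ∈ N' := h0
    rw [hN'] at this
    exact this
  have hpm : (p : Λ) ∈ m := by
    rw [← IsLocalRing.residue_eq_zero_iff, map_natCast, CharP.cast_eq_zero]
  let _ : DistribMulAction G S := DistribMulAction.compHom S (MonoidAlgebra.of Λ G)
  let _ : Module (ZMod p) S := AddCommGroup.zmodModule (n := p) (fun s => by
    rw [← Nat.cast_smul_eq_nsmul Λ]; exact hm _ hpm s)
  obtain ⟨s, hs, hfix⟩ := exists_fixed (G := G) p hG (S := S)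
  have hfix' := smul_fixed (Λ := Λ) (G := G) s hfix
  exact ⟨s, hs, hfix', hm⟩

lemma J_le (p : ℕ) [Fact p.Prime] [CharP (IsLocalRing.ResidueField Λ) p] [Finite G]
    (hG : IsPGroup p G) : J Λ G ≤ Ring.jacobson (MonoidAlgebra Λ G) := by
  rw [Ring.jacobson_eq_sInf_isMaximal]
  refine le_sInf fun M hM j hj => ?_
  change M.IsMaximal at hM
  have : Module.Finite Λ (MonoidAlgebra Λ G) :=
    Module.Finite.equiv (MonoidAlgebra.coeffLinearEquiv Λ).symm
  let S := MonoidAlgebra Λ G ⧸ M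
  have : IsSimpleModule (MonoidAlgebra Λ G) S :=
    isSimpleModule_iff_isCoatom.2 (Ideal.isMaximal_def.1 hM)
  have : Nontrivial S := IsSimpleModule.nontrivial (MonoidAlgebra Λ G) S
  have : Module.Finite Λ S := Module.Finite.trans (MonoidAlgebra Λ G) S
  obtain ⟨s, hs, hfix', hm⟩ := exists_gen (Λ := Λ) (G := G) p hG S
  have hsp := IsSimpleModule.toSpanSingleton_surjective (MonoidAlgebra Λ G) hs
  obtain ⟨a, ha⟩ := hsp (Submodule.Quotient.mk 1)
  have ha' : a • s = (Submodule.Quotient.mk 1 : S) := ha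
  have h1 : j • (Submodule.Quotient.mk 1 : S) = 0 := by
    rw [← ha', ← mul_smul, hfix', map_mul]
    exact hm _ (Ideal.mul_mem_right _ _ hj) s
  rw [← Submodule.Quotient.mk_smul, Submodule.Quotient.mk_eq_zero] at h1
  simpa using h1

lemma exists_left_inv (p : ℕ) [Fact p.Prime] [CharP (IsLocalRing.ResidueField Λ) p] [Finite G]
    (hG : IsPGroup p G) (a : MonoidAlgebra Λ G) (ha : a ∉ J Λ G) : ∃ b, b * a = 1 := by
  by_contra hcon
  have hne : Ideal.span {a} ≠ ⊤ := by
    intro h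
    have h1 : (1 : MonoidAlgebra Λ G) ∈ Ideal.span {a} := h ▸ Submodule.mem_top
    obtain ⟨b, hb⟩ := Ideal.mem_span_singleton'.1 h1
    exact hcon ⟨b, hb⟩
  obtain ⟨M, hM, hle⟩ := Ideal.exists_le_maximal _ hne
  have hJM : J Λ G ≤ M := (J_le p hG).trans (Ring.jacobson_le_of_isMaximal M)
  have haM : a ∈ M := hle (Ideal.mem_span_singleton_self a)
  have hu : IsUnit (aug Λ G a) := by
    by_contra h
    exact ha ((IsLocalRing.mem_maximalIdeal _).2 h)
  obtain ⟨c, hc⟩ := hu.exists_left_inv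
  have h1 : 1 - algebraMap Λ _ c * a ∈ J Λ G := by
    change aug Λ G _ ∈ IsLocalRing.maximalIdeal Λ
    rw [map_sub, map_mul, map_one, AlgHom.commutes]
    simp [hc]
  have h2 := M.add_mem (hJM h1) (M.mul_mem_left (algebraMap Λ _ c) haM)
  rw [sub_add_cancel] at h2
  exact hM.ne_top ((Ideal.eq_top_iff_one _).2 h2)

/-- Projective modules over local rings are free. -/
lemma free_of_local {A : Type*} [Ring A] (J : Ideal A) (hJ : J ≤ Ring.jacobson A)
    (hinv : ∀ a ∉ J, ∃ b, b * a = 1) (P : Type*) [AddCommGroup P] [Module A P]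
    [Module.Finite A P] [Module.Projective A P] :
    ∃ n : ℕ, Nonempty (P ≃ₗ[A] (Fin n → A)) := by
  classical
  have hex : ∃ n : ℕ, ∃ s : Finset P, s.card = n ∧ Submodule.span A (s : Set P) = ⊤ := by
    obtain ⟨s, hs⟩ := Module.Finite.fg_top (R := A) (M := P)
    exact ⟨_, s, rfl, hs⟩
  obtain ⟨s, hcard, hs⟩ := Nat.find_spec hex
  have hmin := fun m => Nat.find_min hex (m := m)
  rw [← hcard] at hmin
  let L : (s → A) →ₗ[A] P := Fintype.linearCombination A (fun x : s => (x : P))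
  have hL : Function.Surjective L := by
    rw [← LinearMap.range_eq_top, Fintype.range_linearCombination]
    simpa using hs
  have hK : ∀ f : s → A, L f = 0 → ∀ x, f x ∈ J := by
    intro f hf x
    by_contra hx
    obtain ⟨b, hb⟩ := hinv _ hx
    refine hmin (s.erase x).card (Finset.card_erase_lt_of_mem x.2) ⟨s.erase x, rfl, ?_⟩
    rw [eq_top_iff, ← hs, Submodule.span_le]
    have hother : ∀ y ∈ s, y ≠ (x : P) →
        y ∈ Submodule.span A ((s.erase (x : P) : Finset P) : Set P) := fun y hy hne =>
      Submodule.subset_span (Finset.mem_coe.2 (Finset.mem_erase.2 ⟨hne, hy⟩))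
    intro y hy
    by_cases hyx : y = x
    · rw [hyx]
      have h0 : b • ∑ z : s, f z • (z : P) = 0 := by
        have : ∑ z : s, f z • (z : P) = 0 := by
          simpa [L, Fintype.linearCombination_apply] using hf
        rw [this, smul_zero]
      rw [← Finset.add_sum_erase _ _ (Finset.mem_univ x), smul_add, ← mul_smul, hb, one_smul] at h0
      have hx0 := eq_neg_of_add_eq_zero_left h0
      change (x : P) ∈ _
      refine (congrArg (· ∈ Submodule.span A ((s.erase (x : P) : Finset P) : Set P)) hx0).mpr ?_
      refine Submodule.neg_mem _ (Submodule.smul_mem _ _ (Submodule.sum_mem _ fun z hz => ?_))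
      refine Submodule.smul_mem _ _ (hother _ z.2 fun h => ?_)
      exact (Finset.mem_erase.1 hz).1 (Subtype.ext h)
    · exact hother y hy hyx
  obtain ⟨σ, hσ⟩ := Module.projective_lifting_property L LinearMap.id hL
  have hσ' : ∀ x, L (σ x) = x := fun x => LinearMap.congr_fun hσ x
  let π : (s → A) →ₗ[A] (s → A) := LinearMap.id - σ ∘ₗ L
  have hker : LinearMap.range π = LinearMap.ker L := by
    apply le_antisymm
    · rintro _ ⟨f, rfl⟩
      simp [π, hσ']
    · intro f hf
      exact ⟨f, by simp [π, LinearMap.mem_ker.1 hf]⟩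
  have hfg : (LinearMap.ker L).FG := by
    rw [← hker, LinearMap.range_eq_map]
    exact Module.Finite.fg_top.map π
  have hbot : LinearMap.ker L = ⊥ := by
    by_contra hne
    have hlt := Submodule.FG.jacobson_smul_lt hne hfg
    refine hlt.not_ge fun f hf => ?_
    have hf' : π f = f := by simp [π, LinearMap.mem_ker.1 hf]
    rw [← hf', pi_eq_sum_univ' f, map_sum]
    refine Submodule.sum_mem _ fun i _ => ?_
    rw [map_smul]
    exact Submodule.smul_mem_smul (hJ (hK f hf i)) (hker ▸ ⟨_, rfl⟩)
  let e : (s → A) ≃ₗ[A] P := LinearEquiv.ofBijective L ⟨LinearMap.ker_eq_bot.1 hbot, hL⟩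
  exact ⟨s.card, ⟨e.symm.trans (LinearEquiv.funCongrLeft A A s.equivFin.symm)⟩⟩

end ProjAux

/-- If `Λ` is a complete noetherian local (commutative) ring whose residue field
has characteristic `p > 0`, `G` is a finite `p`-group, and `P` is a finitely
generated projective module over the group algebra `Λ[G]`, then `P`, regarded as
a `Λ`-module by restriction of scalars along `Λ → Λ[G]`, is a free `Λ`-module
whose rank is divisible by the order of `G`. -/
theorem projective_monoidAlgebra_restrictScalars_free (Λ : Type u) [CommRing Λ]
    [IsLocalRing Λ] [IsNoetherianRing Λ] [IsAdicComplete (IsLocalRing.maximalIdeal Λ) Λ]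
    (p : ℕ) [Fact p.Prime] [CharP (IsLocalRing.ResidueField Λ) p]
    (G : Type u) [Group G] [Finite G] (hG : IsPGroup p G)
    (P : Type v) [AddCommGroup P] [Module (MonoidAlgebra Λ G) P]
    [Module.Finite (MonoidAlgebra Λ G) P] [Module.Projective (MonoidAlgebra Λ G) P]
    [Module Λ P] [IsScalarTower Λ (MonoidAlgebra Λ G) P] :
    Module.Free Λ P ∧ ∃ n : ℕ, Module.finrank Λ P = Nat.card G * n := by
  have : Module.Finite Λ (MonoidAlgebra Λ G) :=
    Module.Finite.equiv (MonoidAlgebra.coeffLinearEquiv Λ).symm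
  have : Module.Free Λ (MonoidAlgebra Λ G) :=
    Module.Free.of_equiv (MonoidAlgebra.coeffLinearEquiv Λ).symm
  obtain ⟨n, ⟨e⟩⟩ := ProjAux.free_of_local (ProjAux.J Λ G) (ProjAux.J_le p hG)
    (ProjAux.exists_left_inv p hG) P
  let e' : P ≃ₗ[Λ] (Fin n → MonoidAlgebra Λ G) := e.restrictScalars Λ
  refine ⟨Module.Free.of_equiv e'.symm, n, ?_⟩
  have := Fintype.ofFinite G
  rw [e'.finrank_eq, Module.finrank_pi_fintype, Finset.sum_const, Finset.card_univ,
    Fintype.card_fin, (MonoidAlgebra.coeffLinearEquiv Λ).finrank_eq,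
    Module.finrank_finsupp_self, smul_eq_mul, mul_comm, Nat.card_eq_fintype_card]
end

section
/- Let Λ be a noetherian local domain whose residue field has characteristic p > 0, let K be the fraction field of Λ, and let G be a finite p-group. Let C be a chain complex of modules over the group algebra Λ[G], indexed by the integers, such that each term C_i is a finitely generated projective Λ[G]-module and C_i = 0 for all but finitely many i. Then each homology module H_i(C ⊗_Λ K) of the base-changed complex is a finite-dimensional K-vector space, it vanishes for all but finitely many i, and the Euler characteristic Σ_i (-1)^i dim_K H_i(C ⊗_Λ K) is divisible by the order of G. -/
universe u

open CategoryTheory ModuleCat HomologicalComplex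

set_option linter.unusedSectionVars false

namespace EulerAux

section free
variable {A : Type*} [Ring A]

/-- insertion of a zero coordinate -/
def insZero (m : ℕ) (i : Fin (m+1)) : (Fin m → A) →ₗ[A] (Fin (m+1) → A) where
  toFun w := i.insertNth (α := fun _ => A) 0 w
  map_add' x y := by
    ext j
    refine Fin.succAboveCases i ?_ (fun k => ?_) j <;> simp
  map_smul' c x := by
    ext j
    refine Fin.succAboveCases i ?_ (fun k => ?_) j <;> simp

theorem exists_free (J : Ideal A) (hJ : J ≤ Ring.jacobson A)
    (hu : ∀ a : A, a ∉ J → IsUnit a) (P : Type*) [AddCommGroup P] [Module A P]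
    [Module.Finite A P] [Module.Projective A P] :
    ∃ n : ℕ, Nonempty (P ≃ₗ[A] (Fin n → A)) := by
  classical
  have hex : ∃ n : ℕ, ∃ f : (Fin n → A) →ₗ[A] P, Function.Surjective f :=
    Module.Finite.exists_fin' A P
  obtain ⟨f, hf⟩ := Nat.find_spec hex
  have hmin := fun m => @Nat.find_min _ _ hex m
  generalize Nat.find hex = n at f hf hmin
  have key : ∀ q ∈ LinearMap.ker f, ∀ i, q i ∈ J := by
    intro q hq i
    by_contra hi
    obtain ⟨u, hu⟩ := hu _ hi
    obtain _ | m := n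
    · exact i.elim0
    refine hmin m (Nat.lt_succ_self m) ⟨f ∘ₗ insZero m i, fun x => ?_⟩
    obtain ⟨v, rfl⟩ := hf x
    have hz : (v - (v i * (↑u⁻¹ : A)) • q) i = 0 := by
      simp [← hu]
    refine ⟨i.removeNth (v - (v i * (↑u⁻¹ : A)) • q), ?_⟩
    have : insZero m i (i.removeNth (v - (v i * (↑u⁻¹ : A)) • q)) = v - (v i * (↑u⁻¹ : A)) • q := by
      change i.insertNth (α := fun _ => A) 0 _ = _
      rw [← hz]
      exact Fin.insertNth_self_removeNth _ _
    rw [LinearMap.comp_apply, this, map_sub, map_smul, LinearMap.mem_ker.1 hq]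
    simp
  obtain ⟨s, hs⟩ := Module.projective_lifting_property f LinearMap.id hf
  have hs' : ∀ x, f (s x) = x := fun x => LinearMap.congr_fun hs x
  let e : (Fin n → A) →ₗ[A] (Fin n → A) := LinearMap.id - s ∘ₗ f
  have he : ∀ v, e v ∈ LinearMap.ker f := fun v => by simp [e, hs']
  have he' : ∀ q ∈ LinearMap.ker f, e q = q := fun q hq => by
    simp [e, LinearMap.mem_ker.1 hq]
  have hr : LinearMap.range e = LinearMap.ker f := by
    apply le_antisymm
    · rintro _ ⟨v, rfl⟩; exact he v
    · intro q hq; exact ⟨q, he' q hq⟩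
  have hfg : (LinearMap.ker f).FG := by
    rw [← hr, LinearMap.range_eq_map]; exact Submodule.FG.map _ Module.Finite.fg_top
  have hbot : LinearMap.ker f = ⊥ := by
    apply hfg.eq_bot_of_le_jacobson_smul
    intro q hq
    rw [← he' q hq]
    have hsum : e q = e (∑ i, q i • fun j => if i = j then (1 : A) else 0) :=
      congrArg e (pi_eq_sum_univ q)
    rw [hsum, map_sum]
    refine Submodule.sum_mem _ fun i _ => ?_
    rw [map_smul]
    exact Submodule.smul_mem_smul (hJ (key q hq i)) (he _)
  exact ⟨n, ⟨(LinearEquiv.ofBijective f ⟨LinearMap.ker_eq_bot.1 hbot, hf⟩).symm⟩⟩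

end free

section localring
variable {Λ : Type*} [CommRing Λ] [IsLocalRing Λ] (p : ℕ) [Fact p.Prime]
  [CharP (IsLocalRing.ResidueField Λ) p] {G : Type*} [Group G] [Finite G]

/-- augmentation -/
noncomputable def aug (Λ G : Type*) [CommRing Λ] [Group G] : MonoidAlgebra Λ G →ₐ[Λ] Λ :=
  MonoidAlgebra.lift Λ Λ G 1

/-- the maximal ideal -/
noncomputable def J (Λ G : Type*) [CommRing Λ] [IsLocalRing Λ] [Group G] :
    Ideal (MonoidAlgebra Λ G) :=
  (IsLocalRing.maximalIdeal Λ).comap (aug Λ G)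

theorem mem_J (a : MonoidAlgebra Λ G) : a ∈ J Λ G ↔ aug Λ G a ∈ IsLocalRing.maximalIdeal Λ :=
  Iff.rfl

theorem natCast_mem : (p : Λ) ∈ IsLocalRing.maximalIdeal Λ := by
  rw [← IsLocalRing.residue_eq_zero_iff]; simp

theorem exists_fixed (hG : IsPGroup p G) (S : Type*) [AddCommGroup S] [Module (MonoidAlgebra Λ G) S]
    (hp : ∀ x : S, p • x = 0) (x : S) (hx : x ≠ 0) :
    ∃ y : S, y ≠ 0 ∧ ∀ g : G, MonoidAlgebra.of Λ G g • y = y := by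
  let T : Submodule ℤ S := Submodule.span ℤ (Set.range fun g : G => MonoidAlgebra.of Λ G g • x)
  have hT : ∀ (g : G), ∀ t ∈ T, MonoidAlgebra.of Λ G g • t ∈ T := by
    intro g t ht
    induction ht using Submodule.span_induction with
    | mem y hy =>
      obtain ⟨h, rfl⟩ := hy
      refine Submodule.subset_span ⟨g * h, ?_⟩
      simp only [map_mul, mul_smul]
    | zero => simp
    | add y z _ _ hy hz => rw [smul_add]; exact T.add_mem hy hz
    | smul a y _ hy => rw [smul_comm]; exact T.smul_mem _ hy
  let : MulAction G T :=
    { smul := fun g t => ⟨MonoidAlgebra.of Λ G g • t.1, hT g _ t.2⟩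
      one_smul := fun t => Subtype.ext (by
        change MonoidAlgebra.of Λ G 1 • t.1 = t.1
        rw [map_one, one_smul])
      mul_smul := fun g h t => Subtype.ext (by
        change MonoidAlgebra.of Λ G (g * h) • t.1 = _ • _ • t.1
        rw [map_mul, mul_smul]) }
  have hp0 : p ≠ 0 := (Fact.out : p.Prime).ne_zero
  have : Module.Finite ℤ T := Module.Finite.span_of_finite ℤ (Set.finite_range _)
  have : Finite T := by
    apply Module.finite_of_fg_torsion
    intro t
    refine ⟨⟨(p : ℤ), mem_nonZeroDivisors_of_ne_zero (by exact_mod_cast hp0)⟩, Subtype.ext ?_⟩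
    change (p : ℤ) • t.1 = 0
    rw [natCast_zsmul, hp]
  let x' : T := ⟨x, Submodule.subset_span ⟨1, by simp only [map_one, one_smul]⟩⟩
  have hd : p ∣ Nat.card T := by
    rw [← addOrderOf_eq_prime (x := x') (p := p) (Subtype.ext (hp x))
      (fun h => hx (congrArg Subtype.val h))]
    exact addOrderOf_dvd_natCard x'
  obtain ⟨b, hb, hb0⟩ := hG.exists_fixed_point_of_prime_dvd_card_of_fixed_point T hd (a := 0)
    (fun g => Subtype.ext (smul_zero (MonoidAlgebra.of Λ G g)))
  exact ⟨b.1, fun h => hb0 (Subtype.ext h.symm), fun g => congrArg Subtype.val (hb g)⟩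

theorem smul_fixed {S : Type*} [AddCommGroup S] [Module Λ S] [Module (MonoidAlgebra Λ G) S]
    [IsScalarTower Λ (MonoidAlgebra Λ G) S] (y : S)
    (hy : ∀ g : G, MonoidAlgebra.of Λ G g • y = y) (a : MonoidAlgebra Λ G) :
    a • y = aug Λ G a • y := by
  induction a using MonoidAlgebra.induction_on with
  | of g => rw [hy]; simp [aug]
  | add a b ha hb => rw [add_smul, ha, hb, map_add, add_smul]
  | smul r a ha => rw [smul_assoc, ha, map_smul, smul_assoc]

theorem maximal_smul {S : Type*} [AddCommGroup S] [Module Λ S] [Module (MonoidAlgebra Λ G) S]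
    [IsScalarTower Λ (MonoidAlgebra Λ G) S] [IsSimpleModule (MonoidAlgebra Λ G) S]
    (r : Λ) (hr : r ∈ IsLocalRing.maximalIdeal Λ) (x : S) : r • x = 0 := by
  have : Nontrivial S := IsSimpleModule.nontrivial (MonoidAlgebra Λ G) S
  have : Module.Finite (MonoidAlgebra Λ G) S := inferInstance
  have : Module.Finite Λ S := Module.Finite.trans (MonoidAlgebra Λ G) S
  let N : Submodule (MonoidAlgebra Λ G) S :=
    { carrier := {s | ∃ t : S, r • t = s}
      zero_mem' := ⟨0, smul_zero _⟩
      add_mem' := by rintro _ _ ⟨a, rfl⟩ ⟨b, rfl⟩; exact ⟨a + b, smul_add _ _ _⟩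
      smul_mem' := by
        rintro c _ ⟨a, rfl⟩
        exact ⟨c • a, by
          rw [← smul_assoc, ← algebraMap_smul (MonoidAlgebra Λ G) r a, ← mul_smul,
            ← Algebra.commutes, mul_smul, algebraMap_smul, smul_assoc]⟩ }
  rcases eq_bot_or_eq_top N with h | h
  · have : r • x ∈ N := ⟨x, rfl⟩
    rwa [h, Submodule.mem_bot] at this
  · exfalso
    have := Submodule.eq_bot_of_le_smul_of_le_jacobson_bot (R := Λ)
      (IsLocalRing.maximalIdeal Λ) (⊤ : Submodule Λ S) Module.Finite.fg_top (by
        intro s _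
        obtain ⟨t, rfl⟩ : s ∈ N := h ▸ Submodule.mem_top
        exact Submodule.smul_mem_smul hr Submodule.mem_top)
        (IsLocalRing.maximalIdeal_le_jacobson _)
    exact bot_ne_top this.symm

theorem J_le (hG : IsPGroup p G) : J Λ G ≤ Ring.jacobson (MonoidAlgebra Λ G) := by
  rw [Ring.jacobson_eq_sInf_isMaximal]
  refine le_sInf fun M hM j hj => ?_
  have : M.IsMaximal := hM
  have : IsSimpleModule (MonoidAlgebra Λ G) (MonoidAlgebra Λ G ⧸ M) :=
    isSimpleModule_iff_isCoatom.2 this.out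
  have hm := maximal_smul (Λ := Λ) (G := G) (S := MonoidAlgebra Λ G ⧸ M)
  have h1 : (Submodule.Quotient.mk 1 : MonoidAlgebra Λ G ⧸ M) ≠ 0 := by
    rw [Ne, Submodule.Quotient.mk_eq_zero]
    exact (Ideal.ne_top_iff_one M).1 hM.ne_top
  obtain ⟨y, hy0, hy⟩ := exists_fixed (Λ := Λ) p hG (MonoidAlgebra Λ G ⧸ M) (fun x => by
    rw [← Nat.cast_smul_eq_nsmul Λ]; exact hm _ (natCast_mem p) x) _ h1
  obtain ⟨b, hb⟩ := IsSimpleModule.toSpanSingleton_surjective (MonoidAlgebra Λ G) hy0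
    (Submodule.Quotient.mk 1 : MonoidAlgebra Λ G ⧸ M)
  rw [LinearMap.toSpanSingleton_apply] at hb
  have : j • (Submodule.Quotient.mk 1 : MonoidAlgebra Λ G ⧸ M) = 0 := by
    rw [← hb, ← mul_smul, smul_fixed y hy]
    refine hm _ ?_ _
    rw [map_mul]
    exact Ideal.mul_mem_right _ _ hj
  rw [← Submodule.Quotient.mk_smul, Submodule.Quotient.mk_eq_zero] at this
  simpa using this

theorem isUnit_of_notMem (hG : IsPGroup p G) (a : MonoidAlgebra Λ G) (ha : a ∉ J Λ G) : IsUnit a := by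
  have left : ∀ a : MonoidAlgebra Λ G, a ∉ J Λ G → ∃ b, b * a = 1 ∧ b ∉ J Λ G := by
    intro a ha
    by_cases h : Ideal.span {a} = ⊤
    · obtain ⟨b, hb⟩ := Ideal.mem_span_singleton'.1 (h ▸ Submodule.mem_top : (1 : MonoidAlgebra Λ G) ∈ Ideal.span {a})
      refine ⟨b, hb, fun hbJ => ?_⟩
      have : aug Λ G (b * a) ∈ IsLocalRing.maximalIdeal Λ := by
        rw [map_mul]; exact Ideal.mul_mem_right _ _ hbJ
      rw [hb, map_one] at this
      exact (Ideal.ne_top_iff_one _).1 (IsLocalRing.maximalIdeal.isMaximal Λ).ne_top this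
    · exfalso
      obtain ⟨M, hM, haM⟩ := Ideal.exists_le_maximal _ h
      have hJM : J Λ G ≤ M := ((J_le p hG).trans (Ring.jacobson_le_of_isMaximal M))
      have haM : a ∈ M := haM (Ideal.mem_span_singleton_self a)
      rw [mem_J, IsLocalRing.mem_maximalIdeal, mem_nonunits_iff, not_not] at ha
      obtain ⟨c, hc⟩ := ha.exists_left_inv
      apply (Ideal.ne_top_iff_one M).1 hM.ne_top
      have h1 : 1 - c • a ∈ M := hJM (by rw [mem_J]; simp [hc])
      have h2 : c • a ∈ M := by
        rw [← algebraMap_smul (MonoidAlgebra Λ G) c a]; exact M.smul_mem _ haM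
      simpa using M.add_mem h1 h2
  obtain ⟨b, hb, hbJ⟩ := left a ha
  obtain ⟨c, hc, -⟩ := left b hbJ
  have : c = a := by rw [← mul_one c, ← hb, ← mul_assoc, hc, one_mul]
  subst this
  exact ⟨⟨c, b, hc, hb⟩, rfl⟩

end localring

section rank

theorem rank_aux (Λ : Type u) [CommRing Λ] [IsDomain Λ] [IsLocalRing Λ]
    (K : Type u) [Field K] (f : Λ →+* K)
    (p : ℕ) [Fact p.Prime] [CharP (IsLocalRing.ResidueField Λ) p]
    (G : Type u) [Group G] [Finite G] (hG : IsPGroup p G)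
    (P : ModuleCat.{u} (MonoidAlgebra Λ G))
    [Module.Finite (MonoidAlgebra Λ G) P] [Module.Projective (MonoidAlgebra Λ G) P] :
    FiniteDimensional K ((ModuleCat.restrictScalars (algebraMap Λ (MonoidAlgebra Λ G)) ⋙
            ModuleCat.extendScalars f).obj P) ∧
    Nat.card G ∣ Module.finrank K ((ModuleCat.restrictScalars (algebraMap Λ (MonoidAlgebra Λ G)) ⋙
            ModuleCat.extendScalars f).obj P) := by
  obtain ⟨n, ⟨e⟩⟩ := exists_free (J Λ G) (J_le p hG) (isUnit_of_notMem p hG) P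
  let M := (ModuleCat.restrictScalars (algebraMap Λ (MonoidAlgebra Λ G))).obj P
  let e' : M ≃ₗ[Λ] (Fin n → MonoidAlgebra Λ G) :=
    { toFun := fun x => e x
      invFun := fun x => e.symm x
      left_inv := e.left_inv
      right_inv := e.right_inv
      map_add' := e.map_add
      map_smul' := fun r x => by
        refine (e.map_smul (algebraMap Λ (MonoidAlgebra Λ G) r) x).trans ?_
        exact algebraMap_smul (MonoidAlgebra Λ G) r (e x) }
  have hfree : Module.Free Λ M := Module.Free.of_equiv e'.symm
  have hfinM : Module.Finite Λ M := Module.Finite.equiv e'.symm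
  have hrk : Module.finrank Λ M = n * Nat.card G := by
    rw [e'.finrank_eq, Module.finrank_pi_fintype]
    have : Module.finrank Λ (MonoidAlgebra Λ G) = Nat.card G := by
      rw [Module.finrank_eq_nat_card_basis (MonoidAlgebra.basis G Λ)]
    simp [this]
  let := f.toAlgebra
  have h1 : FiniteDimensional K (TensorProduct Λ K M) := inferInstance
  have h2 : Module.finrank K (TensorProduct Λ K M) = n * Nat.card G := by
    rw [Module.finrank_baseChange, hrk]
  let E : ((ModuleCat.restrictScalars (algebraMap Λ (MonoidAlgebra Λ G)) ⋙
            ModuleCat.extendScalars f).obj P) ≃ₗ[K] TensorProduct Λ K M :=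
    LinearEquiv.refl K (TensorProduct Λ K M)
  exact ⟨Module.Finite.equiv E.symm, by rw [E.finrank_eq, h2]; exact dvd_mul_left _ _⟩

end rank

section euler
variable {K : Type u} [Field K]

theorem homology_aux (D : HomologicalComplex (ModuleCat.{u} K) (ComplexShape.down ℤ))
    (hD : ∀ i, FiniteDimensional K (D.X i)) (i : ℤ) :
    FiniteDimensional K (D.homology i) ∧
    (Module.finrank K (D.homology i) : ℤ) = Module.finrank K (D.X i)
      - Module.finrank K (LinearMap.range (D.d i (i-1)).hom)
      - Module.finrank K (LinearMap.range (D.d (i+1) i).hom) := by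
  let S := D.sc' (i+1) i (i-1)
  let iso : D.homology i ≅ ModuleCat.of K (LinearMap.ker S.g.hom ⧸ LinearMap.range S.moduleCatToCycles) :=
    ShortComplex.homologyMapIso (D.isoSc' (i+1) i (i-1) (by simp) (by simp)) ≪≫
      S.moduleCatHomologyIso
  let E := iso.toLinearEquiv
  have : FiniteDimensional K S.X₂ := hD i
  have : FiniteDimensional K S.X₁ := hD _
  have h1 := Submodule.finrank_quotient_add_finrank (LinearMap.range S.moduleCatToCycles)
  have h2 := LinearMap.finrank_range_add_finrank_ker S.g.hom
  have h3 : Module.finrank K (LinearMap.range S.moduleCatToCycles) =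
      Module.finrank K (LinearMap.range S.f.hom) := by
    have a := LinearMap.finrank_range_add_finrank_ker S.f.hom
    have b := LinearMap.finrank_range_add_finrank_ker S.moduleCatToCycles
    have c : LinearMap.ker S.moduleCatToCycles = LinearMap.ker S.f.hom := LinearMap.ker_codRestrict _ _ _
    rw [c] at b
    omega
  refine ⟨Module.Finite.equiv E.symm, ?_⟩
  rw [E.finrank_eq]
  change _ = (Module.finrank K S.X₂ : ℤ) - Module.finrank K (LinearMap.range S.g.hom)
      - Module.finrank K (LinearMap.range S.f.hom)
  change ((Module.finrank K (LinearMap.ker S.g.hom ⧸ LinearMap.range S.moduleCatToCycles) : ℕ) : ℤ) = _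
  omega

theorem euler_aux (x h : ℤ → ℤ) (r : ℤ → ℤ) (hx : (Function.support x).Finite)
    (hr : (Function.support r).Finite) (hh : ∀ i, h i = x i - r i - r (i + 1)) :
    ∑ᶠ i : ℤ, (Int.negOnePow i : ℤ) * h i = ∑ᶠ i : ℤ, (Int.negOnePow i : ℤ) * x i := by
  have hs : ∀ f : ℤ → ℤ, (Function.support f).Finite →
      (Function.support fun i => (Int.negOnePow i : ℤ) * f i).Finite := fun f hf =>
    hf.subset (fun i hi h0 => hi (by simp [h0]))
  have h1 : ∀ i : ℤ, (Int.negOnePow i : ℤ) * h i = (Int.negOnePow i : ℤ) * x i -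
     ((Int.negOnePow i : ℤ) * r i - (Int.negOnePow (i + 1) : ℤ) * r (i + 1)) := by
    intro i
    rw [hh, Int.negOnePow_succ]; push_cast; ring
  have hr1 := hs r hr
  have hr2 : (Function.support fun i => (Int.negOnePow (i + 1) : ℤ) * r (i + 1)).Finite :=
    hr1.preimage (f := fun i : ℤ => i + 1) (add_left_injective 1).injOn
  have h2 : ∑ᶠ i : ℤ, (Int.negOnePow (i + 1) : ℤ) * r (i + 1) =
      ∑ᶠ i : ℤ, (Int.negOnePow i : ℤ) * r i :=
    finsum_comp_equiv (Equiv.addRight (1 : ℤ)) (f := fun i => (Int.negOnePow i : ℤ) * r i)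
  rw [finsum_congr h1, finsum_sub_distrib (hs x hx), finsum_sub_distrib hr1 hr2, h2, sub_self, sub_zero]
  exact (hr1.union hr2).subset (Function.support_sub _ _)

end euler
end EulerAux

/-- Let `Λ` be a noetherian local domain whose residue field has characteristic
`p > 0`, let `K` be its fraction field, and let `G` be a finite `p`-group.  Let
`C` be a chain complex of `Λ[G]`-modules indexed by `ℤ` whose terms are finitely
generated projective `Λ[G]`-modules, all but finitely many of which vanish.
Then each homology module of the base-changed complex `C ⊗_Λ K` is a
finite-dimensional `K`-vector space, all but finitely many of them vanish, and
the Euler characteristic `∑ i, (-1)^i dim_K H_i(C ⊗_Λ K)` is divisible by the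
order of `G`. -/
theorem euler_char_dvd (Λ : Type u) [CommRing Λ] [IsDomain Λ] [IsLocalRing Λ]
    [IsNoetherianRing Λ]
    (K : Type u) [Field K] [Algebra Λ K] [IsFractionRing Λ K]
    (p : ℕ) [Fact p.Prime] [CharP (IsLocalRing.ResidueField Λ) p]
    (G : Type u) [Group G] [Finite G] (hG : IsPGroup p G)
    (C : HomologicalComplex (ModuleCat.{u} (MonoidAlgebra Λ G)) (ComplexShape.down ℤ))
    (hfin : ∀ i : ℤ, Module.Finite (MonoidAlgebra Λ G) (C.X i))
    (hproj : ∀ i : ℤ, Module.Projective (MonoidAlgebra Λ G) (C.X i))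
    (hbdd : {i : ℤ | ¬ Subsingleton (C.X i)}.Finite) :
    ∀ D : HomologicalComplex (ModuleCat.{u} K) (ComplexShape.down ℤ),
      D = ((ModuleCat.restrictScalars (algebraMap Λ (MonoidAlgebra Λ G)) ⋙
            ModuleCat.extendScalars (algebraMap Λ K)).mapHomologicalComplex
              (ComplexShape.down ℤ)).obj C →
      (∀ i : ℤ, FiniteDimensional K (D.homology i)) ∧
      {i : ℤ | ¬ Subsingleton (D.homology i)}.Finite ∧
      (Nat.card G : ℤ) ∣
        ∑ᶠ i : ℤ, (Int.negOnePow i : ℤ) * (Module.finrank K (D.homology i) : ℤ) := by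
  rintro D rfl
  set D := ((ModuleCat.restrictScalars (algebraMap Λ (MonoidAlgebra Λ G)) ⋙
            ModuleCat.extendScalars (algebraMap Λ K)).mapHomologicalComplex
              (ComplexShape.down ℤ)).obj C with hDdef
  have hrank : ∀ i, FiniteDimensional K (D.X i) ∧ Nat.card G ∣ Module.finrank K (D.X i) :=
    fun i => by
      have := hfin i
      have := hproj i
      exact EulerAux.rank_aux Λ K (algebraMap Λ K) p G hG (C.X i)
  have hzero : ∀ i, Subsingleton (C.X i) → Subsingleton (D.X i) := by
    intro i hi
    have h0 : Limits.IsZero (C.X i) := ModuleCat.isZero_of_subsingleton _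
    exact ModuleCat.subsingleton_of_isZero (Functor.map_isZero (ModuleCat.restrictScalars (algebraMap Λ (MonoidAlgebra Λ G)) ⋙
            ModuleCat.extendScalars (algebraMap Λ K)) h0)
  have hH := EulerAux.homology_aux D (fun i => (hrank i).1)
  have hfinX : ∀ i, FiniteDimensional K (D.X i) := fun i => (hrank i).1
  refine ⟨fun i => (hH i).1, ?_, ?_⟩
  · refine hbdd.subset fun i hi hs => hi ?_
    have := hzero i hs
    have := (hH i).1
    have h2 := (hH i).2
    rw [Module.finrank_zero_of_subsingleton (M := D.X i)] at h2
    exact (Module.finrank_zero_iff (R := K)).1 (by omega)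
  · rw [EulerAux.euler_aux (fun i => Module.finrank K (D.X i)) _
      (fun i => Module.finrank K (LinearMap.range (D.d i (i-1)).hom)) ?_ ?_ ?_]
    · exact finsum_induction (fun z : ℤ => (Nat.card G : ℤ) ∣ z) (dvd_zero _)
        (fun _ _ => dvd_add) (fun i => Dvd.dvd.mul_left (by exact_mod_cast (hrank i).2) _)
    · refine hbdd.subset fun i hi hs => hi ?_
      have := hzero i hs
      simp only [Nat.cast_eq_zero]
      exact Module.finrank_zero_of_subsingleton
    · refine hbdd.subset fun i hi hs => hi ?_
      have := hzero i hs
      have : Module.finrank K (LinearMap.range (D.d i (i-1)).hom) ≤ Module.finrank K (D.X i) :=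
        LinearMap.finrank_range_le _
      rw [Module.finrank_zero_of_subsingleton (M := D.X i)] at this
      simp only [Nat.cast_eq_zero]
      omega
    · intro i
      rw [(hH i).2]
      have : i + 1 - 1 = i := by ring
      rw [this]
end
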